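/- arXiv:1304.1236 — 2 statements merged into one kernel-verified Lean document; each statement's English description precedes it below -/
import Mathlib

section
/- Let (A_n, φ_n), n = 1,2,…, and (A, φ) be algebraic probability spaces, k ≥ 1, and let a_n, z_{1n}, …, z_{kn} ∈ A_n be self-adjoint elements that mutually commute for each n. Assume a_n converges in moments to a self-adjoint a ∈ A and, for real numbers ζ_1,…,ζ_k, each z_{in} converges in moments to ζ_i·1 (i.e. lim_n φ_n(z_{in}^m) = ζ_i^m for all m ≥ 1). Then for every noncommutative polynomial p(x, y_1, …, y_k) and every m ≥ 1, lim_{n→∞} φ_n( p(a_n, z_{1n}, …, z_{kn})^m ) = φ( p(a, ζ_1·1, …, ζ_k·1)^m ); in particular, the traciality and uniform-boundedness hypotheses are not needed in the commutative case. -/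
open Filter Topology
open scoped ComplexOrder

theorem sq_norm_map_mul_le_of_commute {A : Type*} [Ring A] [Algebra ℂ A] [StarRing A]
    [StarModule ℂ A] (f : A →ₗ[ℂ] ℂ) (hf : ∀ a, 0 ≤ f (star a * a)) {x y : A}
    (hx : IsSelfAdjoint x) (hy : IsSelfAdjoint y) (hxy : Commute x y) :
    ‖f (x * y)‖ ^ 2 ≤ ‖f (x ^ 2)‖ * ‖f (y ^ 2)‖ := by
  have key (t : ℝ) : 0 ≤ f (x ^ 2) + 2 * t * f (x * y) + t ^ 2 * f (y ^ 2) := by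
    have h := hf (x + (t : ℂ) • y)
    have e : star (x + (t : ℂ) • y) * (x + (t : ℂ) • y)
        = x ^ 2 + (2 * t : ℂ) • (x * y) + (t ^ 2 : ℂ) • y ^ 2 := by
      rw [star_add, star_smul, hx.star_eq, hy.star_eq]
      simp only [Complex.star_def, Complex.conj_ofReal, add_mul, mul_add, smul_mul_assoc,
        mul_smul_comm, hxy.eq.symm, sq]
      module
    rw [e] at h
    simpa using h
  have hx2 : 0 ≤ f (x ^ 2) := by simpa [hx.star_eq, sq] using hf x
  have hy2 : 0 ≤ f (y ^ 2) := by simpa [hy.star_eq, sq] using hf y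
  have him : (f (x * y)).im = 0 := by
    have h1 := (Complex.le_def.1 (key 1)).2
    have h2 := (Complex.le_def.1 hx2).2
    have h3 := (Complex.le_def.1 hy2).2
    simp at h1 h2 h3
    linarith
  have hre (t : ℝ) :
      0 ≤ (f (y ^ 2)).re * (t * t) + (2 * (f (x * y)).re) * t + (f (x ^ 2)).re := by
    have h1 := (Complex.le_def.1 (key t)).1
    have e : (t : ℂ) ^ 2 = ((t ^ 2 : ℝ) : ℂ) := by push_cast; rfl
    have e' : (2 * t : ℂ) = ((2 * t : ℝ) : ℂ) := by push_cast; rfl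
    rw [e, e', Complex.add_re, Complex.add_re, Complex.re_ofReal_mul, Complex.re_ofReal_mul,
      Complex.zero_re] at h1
    linarith
  have hd := discrim_le_zero hre
  rw [discrim] at hd
  have hmul := mul_le_mul (Complex.re_le_norm (f (x ^ 2))) (Complex.re_le_norm (f (y ^ 2)))
    (Complex.le_def.1 hy2).1 (norm_nonneg _)
  rw [← Complex.normSq_eq_norm_sq, Complex.normSq_apply, him]
  nlinarith

theorem commute_list_map_prod {ι R : Type*} [Monoid R] {g : ι → R}
    (hc : ∀ i j, Commute (g i) (g j)) (i : ι) (l : List ι) :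
    Commute (g i) (l.map g).prod :=
  Commute.list_prod_right _ _ fun x hx => by
    obtain ⟨j, -, rfl⟩ := List.mem_map.1 hx
    exact hc i j

theorem isSelfAdjoint_list_map_prod {ι R : Type*} [Monoid R] [StarMul R] {g : ι → R}
    (hs : ∀ i, IsSelfAdjoint (g i)) (hc : ∀ i j, Commute (g i) (g j)) (l : List ι) :
    IsSelfAdjoint (l.map g).prod := by
  induction l with
  | nil => simp
  | cons i l ih =>
    rw [List.map_cons, List.prod_cons]
    exact ((hs i).commute_iff ih).1 (commute_list_map_prod hc i l)

/-- Even moments of words in commuting self-adjoint elements are bounded as soon as the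
moments of the letters are. -/
theorem exists_norm_map_list_prod_pow_le {A : ℕ → Type*} [∀ n, Ring (A n)]
    [∀ n, Algebra ℂ (A n)] [∀ n, StarRing (A n)] [∀ n, StarModule ℂ (A n)] {ι : Type*}
    (f : ∀ n, A n →ₗ[ℂ] ℂ) (hf1 : ∀ n, f n 1 = 1)
    (hf : ∀ n a, 0 ≤ f n (star a * a)) {g : ∀ n, ι → A n}
    (hs : ∀ n i, IsSelfAdjoint (g n i)) (hc : ∀ n i j, Commute (g n i) (g n j))
    (hb : ∀ i m, 1 ≤ m → ∃ C : ℝ, ∀ n, ‖f n (g n i ^ m)‖ ≤ C) (l : List ι) {m : ℕ}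
    (hm : 1 ≤ m) : ∃ C : ℝ, ∀ n, ‖f n ((l.map (g n)).prod ^ (2 * m))‖ ≤ C := by
  induction l generalizing m with
  | nil => exact ⟨1, fun n => by simp [hf1]⟩
  | cons i l ih =>
    obtain ⟨C, hC⟩ := hb i (2 * m * 2) (by lia)
    obtain ⟨D, hD⟩ := ih (m := 2 * m) (by lia)
    refine ⟨√(C * D), fun n => Real.le_sqrt_of_sq_le ?_⟩
    have hcl := commute_list_map_prod (hc n) i l
    rw [List.map_cons, List.prod_cons, hcl.mul_pow]
    refine (sq_norm_map_mul_le_of_commute (f n) (hf n) ((hs n i).pow _)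
      ((isSelfAdjoint_list_map_prod (hs n) (hc n) l).pow _) (hcl.pow_pow _ _)).trans ?_
    rw [← pow_mul, ← pow_mul]
    have hD' := hD n
    rw [show 2 * (2 * m) = 2 * m * 2 by ring] at hD'
    exact mul_le_mul (hC n) hD' (norm_nonneg _) ((norm_nonneg _).trans (hC n))

/-- Convergence of a sequence of functionals on all words in the generators implies
convergence on all noncommutative polynomials. -/
theorem tendsto_map_freeAlgebra_lift {A : ℕ → Type*} [∀ n, Ring (A n)]
    [∀ n, Algebra ℂ (A n)] {B : Type*} [Ring B] [Algebra ℂ B] {ι : Type*}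
    (f : ∀ n, A n →ₗ[ℂ] ℂ) (φ : B →ₗ[ℂ] ℂ) (g : ∀ n, ι → A n) (h : ι → B)
    (hw : ∀ l : List ι, Tendsto (fun n => f n (l.map (g n)).prod) atTop
      (𝓝 (φ (l.map h).prod))) (p : FreeAlgebra ℂ ι) :
    Tendsto (fun n => f n (FreeAlgebra.lift ℂ (g n) p)) atTop
      (𝓝 (φ (FreeAlgebra.lift ℂ h p))) := by
  suffices H : ∀ q : FreeAlgebra ℂ ι,
      (∀ l : List ι, Tendsto (fun n => f n ((l.map (g n)).prod * FreeAlgebra.lift ℂ (g n) q))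
        atTop (𝓝 (φ ((l.map h).prod * FreeAlgebra.lift ℂ h q)))) →
      ∀ l : List ι,
        Tendsto (fun n => f n ((l.map (g n)).prod * FreeAlgebra.lift ℂ (g n) (p * q)))
          atTop (𝓝 (φ ((l.map h).prod * FreeAlgebra.lift ℂ h (p * q)))) by
    simpa using H 1 (by simpa using hw) []
  induction p using FreeAlgebra.induction with
  | grade0 c =>
    intro q hq l
    simpa [Algebra.algebraMap_eq_smul_one] using (hq l).const_mul c
  | grade1 i =>
    intro q hq l
    simpa [mul_assoc] using hq (l ++ [i])
  | mul p₁ p₂ h₁ h₂ =>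
    intro q hq
    simp only [mul_assoc]
    exact h₁ _ (h₂ _ hq)
  | add p₁ p₂ h₁ h₂ =>
    intro q hq l
    simpa [add_mul, mul_add] using (h₁ q hq l).add (h₂ q hq l)

/-- Remark 2.3: in the commutative case the traciality and uniform-boundedness
hypotheses are redundant. Given algebraic probability spaces `(A_n, φ_n)` and `(B, φ)`,
mutually commuting self-adjoint elements `a_n, z_{1n}, …, z_{kn} ∈ A_n`, a self-adjoint
`b ∈ B` and reals `ζ_1, …, ζ_k` with `a_n → b` and `z_{in} → ζ_i·1` in moments, the
moments of `p(a_n, z_{1n}, …, z_{kn})` converge to those of `p(b, ζ_1·1, …, ζ_k·1)` for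
every noncommutative polynomial `p` (an element of the free `ℂ`-algebra on `k + 1`
generators, generator `0` standing for `x` and generator `i + 1` for `y_i`). -/
theorem moments_of_noncommutative_polynomial_converge_of_commute
    (A : ℕ → Type*) [∀ n, Ring (A n)] [∀ n, Algebra ℂ (A n)]
    [∀ n, StarRing (A n)] [∀ n, StarModule ℂ (A n)]
    (B : Type*) [Ring B] [Algebra ℂ B] [StarRing B] [StarModule ℂ B]
    (φn : ∀ n, A n →ₗ[ℂ] ℂ) (φ : B →ₗ[ℂ] ℂ)
    (hφn_unital : ∀ n, φn n 1 = 1) (hφn_pos : ∀ n a, 0 ≤ φn n (star a * a))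
    (hφ_unital : φ 1 = 1) (hφ_pos : ∀ x, 0 ≤ φ (star x * x))
    (k : ℕ) (hk : 1 ≤ k)
    (a : ∀ n, A n) (z : Fin k → ∀ n, A n) (b : B) (ζ : Fin k → ℝ)
    (ha_sa : ∀ n, star (a n) = a n) (hz_sa : ∀ i n, star (z i n) = z i n)
    (hb_sa : star b = b)
    -- the elements `a_n, z_{1n}, …, z_{kn}` mutually commute
    (hcomm_az : ∀ n i, Commute (a n) (z i n))
    (hcomm_zz : ∀ n i j, Commute (z i n) (z j n))
    -- convergence in moments
    (hconv_a : ∀ m : ℕ, 1 ≤ m → Tendsto (fun n => φn n (a n ^ m)) atTop (𝓝 (φ (b ^ m))))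
    (hconv_z : ∀ i, ∀ m : ℕ, 1 ≤ m →
      Tendsto (fun n => φn n (z i n ^ m)) atTop (𝓝 ((ζ i : ℂ) ^ m)))
    (p : FreeAlgebra ℂ (Fin (k + 1))) (m : ℕ) (hm : 1 ≤ m) :
    Tendsto
      (fun n => φn n ((FreeAlgebra.lift ℂ
        (fun i => (Fin.cases (a n) (fun j => z j n) i : A n)) p) ^ m))
      atTop
      (𝓝 (φ ((FreeAlgebra.lift ℂ
        (fun i => (Fin.cases b (fun j => (ζ j : ℂ) • (1 : B)) i : B)) p) ^ m))) := by
  rw [← map_pow]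
  simp_rw [← map_pow]
  set g : ∀ n, Fin (k + 1) → A n :=
    fun n i => (Fin.cases (a n) (fun j => z j n) i : A n) with hg
  set h : Fin (k + 1) → B := fun i => (Fin.cases b (fun j => (ζ j : ℂ) • (1 : B)) i : B) with hh
  have hs : ∀ n i, IsSelfAdjoint (g n i) := fun n i => by
    cases i using Fin.cases with
    | zero => exact ha_sa n
    | succ j => exact hz_sa j n
  have hc : ∀ n i j, Commute (g n i) (g n j) := fun n i j => by
    cases i using Fin.cases with
    | zero =>
      cases j using Fin.cases with
      | zero => exact Commute.refl _
      | succ j => exact hcomm_az n j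
    | succ i =>
      cases j using Fin.cases with
      | zero => exact (hcomm_az n i).symm
      | succ j => exact hcomm_zz n i j
  have hb : ∀ i m, 1 ≤ m → ∃ C : ℝ, ∀ n, ‖φn n (g n i ^ m)‖ ≤ C := fun i m hm => by
    have : ∃ c, Tendsto (fun n => φn n (g n i ^ m)) atTop (𝓝 c) := by
      cases i using Fin.cases with
      | zero => exact ⟨_, hconv_a m hm⟩
      | succ j => exact ⟨_, hconv_z j m hm⟩
    obtain ⟨c, hc⟩ := this
    obtain ⟨C, hC⟩ := hc.norm.bddAbove_range
    exact ⟨C, fun n => hC ⟨n, rfl⟩⟩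
  have hvar (j : Fin k) :
      Tendsto (fun n => φn n ((z j n - (ζ j : ℂ) • 1) ^ 2)) atTop (𝓝 0) := by
    have e (n : ℕ) : φn n ((z j n - (ζ j : ℂ) • 1) ^ 2)
        = φn n (z j n ^ 2) - 2 * ζ j * φn n (z j n ^ 1) + (ζ j : ℂ) ^ 2 := by
      have : (z j n - (ζ j : ℂ) • 1) ^ 2
          = z j n ^ 2 - (2 * ζ j : ℂ) • z j n ^ 1 + ((ζ j : ℂ) ^ 2) • (1 : A n) := by
        simp only [sq, sub_mul, mul_sub, smul_mul_assoc, mul_smul_comm, one_mul, mul_one,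
          pow_one]
        module
      rw [this]
      simp [hφn_unital]
    simp_rw [e]
    have := ((hconv_z j 2 (by lia)).sub
      ((hconv_z j 1 le_rfl).const_mul (2 * ζ j : ℂ))).add_const ((ζ j : ℂ) ^ 2)
    convert this using 2
    ring
  refine tendsto_map_freeAlgebra_lift φn φ g h (fun l => ?_) (p ^ m)
  suffices H : ∀ r : ℕ, Tendsto (fun n => φn n (a n ^ r * (l.map (g n)).prod)) atTop
      (𝓝 (φ (b ^ r * (l.map h).prod))) by simpa using H 0
  induction l with
  | nil =>
    intro r
    rcases Nat.eq_zero_or_pos r with rfl | hr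
    · simp [hφn_unital, hφ_unital]
    · simpa using hconv_a r hr
  | cons i l ih =>
    intro r
    simp only [List.map_cons, List.prod_cons]
    cases i using Fin.cases with
    | zero => simpa [hg, hh, pow_succ, mul_assoc] using ih (r + 1)
    | succ j =>
      have hword (n : ℕ) :
          ((List.replicate r 0 ++ l).map (g n)).prod = a n ^ r * (l.map (g n)).prod := by
        simp [hg]
      obtain ⟨C, hC⟩ := exists_norm_map_list_prod_pow_le φn hφn_unital hφn_pos hs hc hb
        (List.replicate r 0 ++ l) (m := 1) le_rfl
      have hnull : Tendsto (fun n => φn n ((z j n - (ζ j : ℂ) • 1) *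
          (a n ^ r * (l.map (g n)).prod))) atTop (𝓝 0) := by
        refine squeeze_zero_norm (a := fun n => √(‖φn n ((z j n - (ζ j : ℂ) • 1) ^ 2)‖ * C))
          (fun n => Real.le_sqrt_of_sq_le ?_) (by simpa using ((hvar j).norm.mul_const C).sqrt)
        rw [← hword]
        have hsz : IsSelfAdjoint (z j n - (ζ j : ℂ) • (1 : A n)) := by
          simp [IsSelfAdjoint, hz_sa]
        have hcz : Commute (z j n - (ζ j : ℂ) • (1 : A n))
            ((List.replicate r 0 ++ l).map (g n)).prod :=
          (commute_list_map_prod (hc n) j.succ _).sub_left ((Commute.one_left _).smul_left _)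
        exact (sq_norm_map_mul_le_of_commute (φn n) (hφn_pos n) hsz
          (isSelfAdjoint_list_map_prod (hs n) (hc n) _) hcz).trans
          (mul_le_mul_of_nonneg_left (hC n) (norm_nonneg _))
      have hsum := hnull.add ((ih r).const_mul (ζ j : ℂ))
      convert hsum using 2 with n
      · have hza : a n ^ r * (z j n * (l.map (g n)).prod)
            = z j n * (a n ^ r * (l.map (g n)).prod) :=
          ((hcomm_az n j).pow_left r).left_comm _
        simp [hg, sub_mul] at hza ⊢
        rw [hza]
      · simp [hh]
end

section
/- Let (A, φ) be an algebraic probability space and b ∈ A a self-adjoint element with φ(b) = 0 and φ(b²) = 1. For N ≥ 1 and i ∈ {1,…,N} let b(i) = 1⊗…⊗b⊗…⊗1 ∈ A^{⊗N}, and for 1 ≤ n ≤ N set b^{(N,n)} = Σ_{1 ≤ i_1 < … < i_n ≤ N} b(i_1)···b(i_n). Then for every fixed n ≥ 1, n!·b^{(N,n)}/N^{n/2} converges in moments as N → ∞ to H̃_n(g) where g is standard Gaussian; that is, for every integer m ≥ 1, lim_{N→∞} φ^{⊗N}( (n!·b^{(N,n)}/N^{n/2})^m ) = ∫_ℝ H̃_n(x)^m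 dγ(x), where γ is the standard Gaussian measure N(0,1) and H̃_n is the monic Hermite polynomial of degree n. -/
open scoped TensorProduct ComplexOrder
open Filter Topology

noncomputable section

/-- The product state `φ^{⊗N}` on the `N`-fold algebraic tensor power `A^{⊗N}`,
determined by `φ^{⊗N}(a_1 ⊗ ⋯ ⊗ a_N) = φ(a_1) ⋯ φ(a_N)`. -/
def prodState {A : Type*} [Ring A] [Algebra ℂ A] (φ : A →ₗ[ℂ] ℂ) (N : ℕ) :
    (⨂[ℂ] _ : Fin N, A) →ₗ[ℂ] ℂ :=
  PiTensorProduct.lift ((MultilinearMap.mkPiAlgebra ℂ (Fin N) ℂ).compLinearMap fun _ => φ)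

/-- `b(i) = 1 ⊗ ⋯ ⊗ b ⊗ ⋯ ⊗ 1 ∈ A^{⊗N}` with `b` at the `i`-th tensor factor. -/
def elemAt {A : Type*} [Ring A] [Algebra ℂ A] (b : A) (N : ℕ) (i : Fin N) :
    ⨂[ℂ] _ : Fin N, A :=
  PiTensorProduct.tprod ℂ (Function.update (fun _ => (1 : A)) i b)

/-- `b^{(N,n)} = ∑_{1 ≤ i_1 < ⋯ < i_n ≤ N} b(i_1) ⋯ b(i_n)` (and `b^{(N,0)} = 1`). -/
def bPow {A : Type*} [Ring A] [Algebra ℂ A] (b : A) (N n : ℕ) : ⨂[ℂ] _ : Fin N, A :=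
  ∑ s ∈ Finset.powersetCard n (Finset.univ : Finset (Fin N)),
    ((s.sort (· ≤ ·)).map (elemAt b N)).prod

/-- `F^{(N,n)}(y)`: the sum, over all ways to choose `n` distinct tensor positions and
to place `y` at one of them and `b` at the other `n - 1` (with `1` elsewhere), of the
corresponding elementary tensors. -/
def Fsum {A : Type*} [Ring A] [Algebra ℂ A] (b y : A) (N n : ℕ) : ⨂[ℂ] _ : Fin N, A :=
  ∑ s ∈ Finset.powersetCard n (Finset.univ : Finset (Fin N)), ∑ i ∈ s,
    PiTensorProduct.tprod ℂ (fun j => if j = i then y else if j ∈ s then b else 1)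

open Polynomial in
/-- The Hermite polynomial with real coefficients. -/
def hermiteReal (n : ℕ) : ℝ[X] := (hermite n).map (Int.castRingHom ℝ)

/-- The expectation of `p(g)` for a standard Gaussian `g`. -/
def gaussianExpectation (p : Polynomial ℝ) : ℝ :=
  ∫ x, p.eval x ∂(ProbabilityTheory.gaussianReal 0 1)

section Hermite

open Polynomial

lemma derivative_hermite_succ (n : ℕ) :
    derivative (hermite (n + 1)) = ((n + 1 : ℕ) : ℤ[X]) * hermite n := by
  induction n with
  | zero => simp
  | succ n ih =>
    have h := hermite_succ n
    rw [hermite_succ (n + 1), derivative_sub, derivative_mul, ih, derivative_mul, h]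
    simp only [derivative_X, derivative_natCast]
    push_cast
    ring

lemma hermiteReal_zero : hermiteReal 0 = 1 := by simp [hermiteReal]

lemma X_mul_hermiteReal (n : ℕ) :
    X * hermiteReal n = hermiteReal (n + 1) + (n : ℝ[X]) * hermiteReal (n - 1) := by
  have h : X * hermite n = hermite (n + 1) + (n : ℤ[X]) * hermite (n - 1) := by
    rw [hermite_succ]
    cases n with
    | zero => simp
    | succ n => rw [derivative_hermite_succ]; simp
  simpa [hermiteReal] using congrArg (Polynomial.map (Int.castRingHom ℝ)) h

end Hermite

section Gaussian

open Polynomial MeasureTheory ProbabilityTheory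

lemma integrable_eval_gaussianReal (p : ℝ[X]) :
    Integrable (fun x => p.eval x) (gaussianReal 0 1) := by
  simp only [eval_eq_sum_range]
  refine integrable_finsetSum _ fun i _ => Integrable.const_mul ?_ _
  refine (integrable_norm_iff (by fun_prop)).1 ?_
  simpa [norm_pow] using (memLp_id_gaussianReal (μ := 0) (v := 1) i).integrable_norm_pow'

lemma gaussianExpectation_one : gaussianExpectation 1 = 1 := by simp [gaussianExpectation]

lemma gaussianExpectation_zero : gaussianExpectation 0 = 0 := by simp [gaussianExpectation]

lemma gaussianExpectation_sub (p q : ℝ[X]) :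
    gaussianExpectation (p - q) = gaussianExpectation p - gaussianExpectation q := by
  simp only [gaussianExpectation, eval_sub]
  exact integral_sub (integrable_eval_gaussianReal p) (integrable_eval_gaussianReal q)

lemma gaussianExpectation_add (p q : ℝ[X]) :
    gaussianExpectation (p + q) = gaussianExpectation p + gaussianExpectation q := by
  simp only [gaussianExpectation, eval_add]
  exact integral_add (integrable_eval_gaussianReal p) (integrable_eval_gaussianReal q)

lemma gaussianExpectation_sum {ι : Type*} (s : Finset ι) (p : ι → ℝ[X]) :
    gaussianExpectation (∑ i ∈ s, p i) = ∑ i ∈ s, gaussianExpectation (p i) := by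
  simp only [gaussianExpectation, eval_finsetSum]
  exact integral_finsetSum _ fun i _ => integrable_eval_gaussianReal (p i)

lemma integrable_eval_mul_exp (p : ℝ[X]) :
    Integrable fun x : ℝ => p.eval x * Real.exp (-(x ^ 2 / 2)) := by
  simp only [eval_eq_sum_range, Finset.sum_mul, mul_assoc]
  refine integrable_finsetSum _ fun i _ => Integrable.const_mul ?_ _
  have h := integrable_rpow_mul_exp_neg_mul_sq (b := 1 / 2) (by norm_num) (s := i)
    (by linarith [(Nat.cast_nonneg i : (0 : ℝ) ≤ i)])
  refine h.congr (ae_of_all _ fun x => ?_)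
  simp only [Real.rpow_natCast]
  ring_nf

lemma gaussianExpectation_hermiteReal_succ (n : ℕ) :
    gaussianExpectation (hermiteReal (n + 1)) = 0 := by
  have hd : ∀ x : ℝ, HasDerivAt (fun x : ℝ => (hermiteReal n).eval x * Real.exp (-(x ^ 2 / 2)))
      (-((hermiteReal (n + 1)).eval x * Real.exp (-(x ^ 2 / 2)))) x := by
    intro x
    have he : HasDerivAt (fun x : ℝ => Real.exp (-(x ^ 2 / 2)))
        (Real.exp (-(x ^ 2 / 2)) * -x) x := by
      refine HasDerivAt.exp ?_
      exact ((hasDerivAt_pow 2 x).div_const 2).neg.congr_deriv (by simp)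
    refine (((hermiteReal n).hasDerivAt x).mul he).congr_deriv ?_
    simp only [hermiteReal, hermite_succ, Polynomial.map_sub, Polynomial.map_mul, map_X,
      derivative_map, eval_sub, eval_mul, eval_X]
    ring
  have h0 := integral_eq_zero_of_hasDerivAt_of_integrable hd
    (integrable_eval_mul_exp _).neg (integrable_eval_mul_exp _)
  rw [integral_neg, neg_eq_zero] at h0
  rw [gaussianExpectation, integral_gaussianReal_eq_integral_smul one_ne_zero]
  simp only [gaussianPDFReal, smul_eq_mul, NNReal.coe_one, mul_one, sub_zero]
  rw [← mul_zero (√(2 * Real.pi))⁻¹, ← h0, ← integral_const_mul]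
  congr 1 with x
  rw [neg_div]
  ring

end Gaussian

section AugmentedMonomial

open MvPolynomial

/-- The augmented monomial symmetric polynomial: the sum of `∏ j, x_{f j} ^ k j` over all
injections `f`. -/
def augMonomial (σ : Type*) [Fintype σ] [DecidableEq σ] {s : ℕ} (k : Fin s → ℕ) :
    MvPolynomial σ ℂ :=
  ∑ f : Fin s ↪ σ, ∏ j, X (f j) ^ k j

variable {σ : Type*} [Fintype σ] [DecidableEq σ]

lemma augMonomial_fin_zero (k : Fin 0 → ℕ) : augMonomial σ k = 1 := by
  simp [augMonomial]

lemma psum_mul_augMonomial {s : ℕ} (l : ℕ) (k : Fin s → ℕ) :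
    psum σ ℂ l * augMonomial σ k = augMonomial σ (Fin.cons l k : Fin (s + 1) → ℕ) +
      ∑ j, augMonomial σ (Function.update k j (k j + l)) := by
  have hcons : augMonomial σ (Fin.cons l k : Fin (s + 1) → ℕ) =
      ∑ f : Fin s ↪ σ, ∑ i with i ∉ Set.range f, X i ^ l * ∏ j, X (f j) ^ k j := by
    rw [augMonomial, ← (Equiv.embeddingFinSucc s σ).symm.sum_comp, Fintype.sum_sigma]
    refine Finset.sum_congr rfl fun f _ => ?_
    rw [← Finset.sum_subtype_eq_sum_filter, Finset.subtype_univ]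
    refine Finset.sum_congr rfl fun i _ => ?_
    rw [Fin.prod_univ_succ]
    simp
  have hupd : ∑ j, augMonomial σ (Function.update k j (k j + l)) =
      ∑ f : Fin s ↪ σ, ∑ i with i ∈ Set.range f, X i ^ l * ∏ j, X (f j) ^ k j := by
    simp only [augMonomial]
    rw [Finset.sum_comm]
    refine Finset.sum_congr rfl fun f _ => ?_
    have : (Finset.univ.filter fun i => i ∈ Set.range f) = Finset.univ.map f := by
      ext; simp
    rw [this, Finset.sum_map]
    refine Finset.sum_congr rfl fun j _ => ?_
    rw [← Finset.mul_prod_erase _ _ (Finset.mem_univ j),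
      ← Finset.mul_prod_erase _ (fun j => X (f j) ^ k j) (Finset.mem_univ j), ← mul_assoc,
      Function.update_self, ← pow_add, add_comm l]
    congr 1
    refine Finset.prod_congr rfl fun i hi => ?_
    rw [Function.update_of_ne (Finset.ne_of_mem_erase hi)]
  rw [hcons, hupd, ← Finset.sum_add_distrib, augMonomial, Finset.mul_sum]
  refine Finset.sum_congr rfl fun f _ => ?_
  rw [psum, Finset.sum_mul, add_comm,
    Finset.sum_filter_add_sum_filter_not _ (fun i => i ∈ Set.range f)]

lemma augMonomial_one (n : ℕ) :
    augMonomial σ (fun _ : Fin n => 1) = (n.factorial : ℂ) • esymm σ ℂ n := by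
  have hmaps : ∀ f ∈ (Finset.univ : Finset (Fin n ↪ σ)),
      Finset.univ.map f ∈ Finset.powersetCard n (Finset.univ : Finset σ) := by
    intro f _
    simp [Finset.mem_powersetCard]
  rw [augMonomial, ← Finset.sum_fiberwise_of_maps_to hmaps, esymm, Finset.smul_sum]
  refine Finset.sum_congr rfl fun t ht => ?_
  have hcard : (Finset.univ.filter fun f : Fin n ↪ σ => Finset.univ.map f = t).card
      = n.factorial := by
    have htc : t.card = n := (Finset.mem_powersetCard.1 ht).2
    have : Fintype.card (Fin n ↪ t) = n.factorial := by
      rw [Fintype.card_embedding_eq]; simp [htc, Nat.descFactorial_self]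
    rw [← this, ← Finset.card_univ]
    symm
    refine Finset.card_bij (fun g _ => g.trans (Function.Embedding.subtype _)) ?_ ?_ ?_
    · intro g _
      simp only [Finset.mem_filter, Finset.mem_univ, true_and]
      refine Finset.eq_of_subset_of_card_le ?_ (by simp [htc])
      intro x hx
      obtain ⟨j, -, rfl⟩ := Finset.mem_map.1 hx
      exact (g j).2
    · intro g _ g' _ h
      ext j
      exact DFunLike.congr_fun h j
    · intro f hf
      have hf' : Finset.univ.map f = t := (Finset.mem_filter.1 hf).2
      refine ⟨f.codRestrict t fun j => ?_, Finset.mem_univ _, ?_⟩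
      · rw [← hf']; simp
      · ext j; rfl
  have hconst : ∀ f ∈ Finset.univ.filter (fun f : Fin n ↪ σ => Finset.univ.map f = t),
      (∏ j, X (f j) ^ 1 : MvPolynomial σ ℂ) = ∏ i ∈ t, X i := by
    intro f hf
    rw [← (Finset.mem_filter.1 hf).2, Finset.prod_map]
    simp
  rw [Finset.sum_congr rfl hconst, Finset.sum_const, hcard, Nat.cast_smul_eq_nsmul]

end AugmentedMonomial

section Limit

open Polynomial

/-- The limit of the normalized power sums `N ^ (-l / 2) * ∑ i, x_i ^ l`. -/
def powerSumLimit (l : ℕ) : ℝ[X] := if l = 1 then X else if l = 2 then 1 else 0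

/-- The limit of the normalized augmented monomials with exponents `k`. -/
def augMonomialLimit {s : ℕ} (k : Fin s → ℕ) : ℝ[X] :=
  if ∀ j, k j ≤ 2 then hermiteReal (∑ j, if k j = 1 then 1 else 0) else 0

lemma augMonomialLimit_eq_zero {s : ℕ} {k : Fin s → ℕ} (j : Fin s) (hj : 2 < k j) :
    augMonomialLimit k = 0 :=
  if_neg fun h => absurd (h j) (by omega)

lemma augMonomialLimit_fin_zero (k : Fin 0 → ℕ) : augMonomialLimit k = 1 := by
  simp [augMonomialLimit, hermiteReal_zero]

lemma augMonomialLimit_one (n : ℕ) :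
    augMonomialLimit (fun _ : Fin n => 1) = hermiteReal n := by
  simp [augMonomialLimit]

lemma augMonomialLimit_update_succ {s : ℕ} {k : Fin s → ℕ} (hk : ∀ j, 1 ≤ k j)
    (hk2 : ∀ j, k j ≤ 2) (j : Fin s) :
    augMonomialLimit (Function.update k j (k j + 1)) =
      if k j = 1 then hermiteReal ((∑ j, if k j = 1 then 1 else 0) - 1) else 0 := by
  split_ifs with hj
  · have hle : ∀ i, Function.update k j (k j + 1) i ≤ 2 := by
      intro i
      rcases eq_or_ne i j with rfl | hij
      · simp [hj]
      · simpa [hij] using hk2 i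
    rw [augMonomialLimit, if_pos hle]
    congr 1
    have herase : ∀ i ∈ Finset.univ.erase j,
        (if Function.update k j (k j + 1) i = 1 then 1 else 0) = if k i = 1 then 1 else 0 :=
      fun i hi => by rw [Function.update_of_ne (Finset.ne_of_mem_erase hi)]
    rw [← Finset.add_sum_erase _ _ (Finset.mem_univ j), Finset.sum_congr rfl herase,
      ← Finset.add_sum_erase _ (fun j => if k j = 1 then 1 else 0) (Finset.mem_univ j),
      Function.update_self, hj, if_neg (by norm_num), if_pos rfl, zero_add,
      Nat.add_sub_cancel_left]
  · refine augMonomialLimit_eq_zero j ?_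
    have := hk j
    simp only [Function.update_self]
    omega

lemma powerSumLimit_mul_augMonomialLimit {s : ℕ} {l : ℕ} (hl : 1 ≤ l) {k : Fin s → ℕ}
    (hk : ∀ j, 1 ≤ k j) :
    powerSumLimit l * augMonomialLimit k =
      augMonomialLimit (Fin.cons l k : Fin (s + 1) → ℕ) +
        ∑ j, augMonomialLimit (Function.update k j (k j + l)) := by
  by_cases hk2 : ∀ j, k j ≤ 2
  · obtain rfl | hl1 := eq_or_lt_of_le hl
    · have hcons : augMonomialLimit (Fin.cons 1 k : Fin (s + 1) → ℕ) =
          hermiteReal ((∑ j, if k j = 1 then 1 else 0) + 1) := by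
        rw [augMonomialLimit, if_pos (by simpa [Fin.forall_fin_succ] using hk2),
          Fin.sum_univ_succ]
        simp [add_comm]
      simp only [augMonomialLimit_update_succ hk hk2, hcons]
      rw [augMonomialLimit, if_pos hk2, powerSumLimit, if_pos rfl, X_mul_hermiteReal]
      congr 1
      push_cast
      rw [Finset.sum_mul]
      simp
    · have hupd : ∀ j, augMonomialLimit (Function.update k j (k j + l)) = 0 := fun j =>
        augMonomialLimit_eq_zero j (by have := hk j; simp only [Function.update_self]; omega)
      simp only [hupd, Finset.sum_const_zero, add_zero]
      obtain rfl | hl2 := eq_or_lt_of_le (show 2 ≤ l from hl1)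
      · rw [augMonomialLimit, augMonomialLimit, if_pos hk2,
          if_pos (by simpa [Fin.forall_fin_succ] using hk2), Fin.sum_univ_succ]
        simp [powerSumLimit]
      · rw [augMonomialLimit_eq_zero (0 : Fin (s + 1)) (by simpa using hl2), powerSumLimit,
          if_neg (by omega), if_neg (by omega), zero_mul]
  · push Not at hk2
    obtain ⟨i, hi⟩ := hk2
    rw [augMonomialLimit_eq_zero i hi, augMonomialLimit_eq_zero i.succ (by simpa using hi),
      Finset.sum_eq_zero, mul_zero, add_zero]
    intro j _
    refine augMonomialLimit_eq_zero i ?_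
    rcases eq_or_ne i j with rfl | hij
    · simp only [Function.update_self]; omega
    · simpa [hij] using hi

lemma gaussianExpectation_augMonomialLimit {s : ℕ} {k : Fin s → ℕ} (hk : ∀ j, 1 ≤ k j) :
    gaussianExpectation (augMonomialLimit k) = ∏ j, if k j = 2 then 1 else 0 := by
  by_cases h : ∀ j, k j = 2
  · simp [augMonomialLimit, h, hermiteReal_zero, gaussianExpectation_one]
  · push Not at h
    obtain ⟨i, hi⟩ := h
    rw [Finset.prod_eq_zero (Finset.mem_univ i) (if_neg hi), augMonomialLimit]
    split_ifs with hk2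
    · have hi1 : k i = 1 := by have := hk i; have := hk2 i; omega
      rw [← Finset.add_sum_erase _ _ (Finset.mem_univ i), if_pos hi1, add_comm,
        gaussianExpectation_hermiteReal_succ]
    · exact gaussianExpectation_zero

end Limit

section Convergence

open MvPolynomial

/-- The normalizing factor `N ^ (-1 / 2)`. -/
def normScale (N : ℕ) : ℂ := (((N : ℝ) ^ (-(1 / 2) : ℝ) : ℝ) : ℂ)

lemma natCast_mul_normScale_sq {N : ℕ} (hN : N ≠ 0) : (N : ℂ) * normScale N ^ 2 = 1 := by
  have : (N : ℝ) * ((N : ℝ) ^ (-(1 / 2) : ℝ)) ^ 2 = 1 := by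
    rw [← Real.rpow_mul_natCast (Nat.cast_nonneg N)]
    norm_num
    rw [Real.rpow_neg_one, mul_inv_cancel₀ (by exact_mod_cast hN)]
  rw [normScale]
  exact_mod_cast this

lemma tendsto_normScale : Tendsto normScale atTop (𝓝 0) := by
  have h := (tendsto_rpow_neg_atTop (y := 1 / 2) (by norm_num)).comp
    (tendsto_natCast_atTop_atTop (R := ℝ))
  exact_mod_cast (Complex.continuous_ofReal.tendsto 0).comp h

/-- The augmented monomial in `N` variables normalized by `N ^ (-(∑ j, k j) / 2)`. -/
def scaledAugMonomial (N : ℕ) {s : ℕ} (k : Fin s → ℕ) : MvPolynomial (Fin N) ℂ :=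
  normScale N ^ (∑ j, k j) • augMonomial (Fin N) k

lemma scaledAugMonomial_fin_zero (N : ℕ) (k : Fin 0 → ℕ) : scaledAugMonomial N k = 1 := by
  simp [scaledAugMonomial, augMonomial_fin_zero]

lemma scaled_psum_mul_scaledAugMonomial (N : ℕ) {s : ℕ} (l : ℕ) (k : Fin s → ℕ) :
    (normScale N ^ l • psum (Fin N) ℂ l) * scaledAugMonomial N k =
      scaledAugMonomial N (Fin.cons l k : Fin (s + 1) → ℕ) +
        ∑ j, scaledAugMonomial N (Function.update k j (k j + l)) := by
  have hsum : ∀ j, ∑ i, Function.update k j (k j + l) i = l + ∑ i, k i := by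
    intro j
    rw [← Finset.add_sum_erase _ _ (Finset.mem_univ j),
      ← Finset.add_sum_erase _ k (Finset.mem_univ j), Function.update_self,
      Finset.sum_congr rfl fun i hi => Function.update_of_ne (Finset.ne_of_mem_erase hi) _ _]
    ring
  simp only [scaledAugMonomial, hsum, ← Finset.smul_sum, Fin.sum_univ_succ, Fin.cons_zero,
    Fin.cons_succ, ← smul_add, ← psum_mul_augMonomial, smul_mul_smul_comm, pow_add]

/-- The polynomials `a N` behave asymptotically under `ψ N` like the variable `p(g)`, `g` standard
Gaussian, when tested against all normalized augmented monomials. -/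
def ConvergesTo (ψ : ∀ N, MvPolynomial (Fin N) ℂ →ₗ[ℂ] ℂ) (a : ∀ N, MvPolynomial (Fin N) ℂ)
    (p : Polynomial ℝ) : Prop :=
  ∀ ⦃s : ℕ⦄ (k : Fin s → ℕ), (∀ j, 1 ≤ k j) →
    Tendsto (fun N => ψ N (a N * scaledAugMonomial N k)) atTop
      (𝓝 ((gaussianExpectation (p * augMonomialLimit k) : ℝ) : ℂ))

namespace ConvergesTo

variable {ψ : ∀ N, MvPolynomial (Fin N) ℂ →ₗ[ℂ] ℂ} {a a' : ∀ N, MvPolynomial (Fin N) ℂ}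
  {p p' : Polynomial ℝ}

lemma sub (h : ConvergesTo ψ a p) (h' : ConvergesTo ψ a' p') :
    ConvergesTo ψ (fun N => a N - a' N) (p - p') := by
  intro s k hk
  simpa only [sub_mul, map_sub, gaussianExpectation_sub, Complex.ofReal_sub] using
    (h k hk).sub (h' k hk)

lemma sum {ι : Type*} (t : Finset ι) {a : ι → ∀ N, MvPolynomial (Fin N) ℂ}
    {p : ι → Polynomial ℝ} (h : ∀ i ∈ t, ConvergesTo ψ (a i) (p i)) :
    ConvergesTo ψ (fun N => ∑ i ∈ t, a i N) (∑ i ∈ t, p i) := by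
  intro s k hk
  simpa only [Finset.sum_mul, map_sum, gaussianExpectation_sum, Complex.ofReal_sum] using
    tendsto_finsetSum t fun i hi => h i hi k hk

lemma psum_mul (h : ConvergesTo ψ a p) {l : ℕ} (hl : 1 ≤ l) :
    ConvergesTo ψ (fun N => (normScale N ^ l • psum (Fin N) ℂ l) * a N)
      (powerSumLimit l * p) := by
  intro s k hk
  have hcons : ∀ j, 1 ≤ (Fin.cons l k : Fin (s + 1) → ℕ) j := by
    simpa [Fin.forall_fin_succ] using ⟨hl, hk⟩
  have hupd : ∀ j i, 1 ≤ Function.update k j (k j + l) i := by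
    intro j i
    rcases eq_or_ne i j with rfl | hij
    · simp only [Function.update_self]; omega
    · simpa [hij] using hk i
  have hlim := (h _ hcons).add (tendsto_finsetSum Finset.univ fun j _ => h _ (hupd j))
  have hp : powerSumLimit l * p * augMonomialLimit k =
      p * augMonomialLimit (Fin.cons l k : Fin (s + 1) → ℕ) +
        ∑ j, p * augMonomialLimit (Function.update k j (k j + l)) := by
    rw [← Finset.mul_sum, ← mul_add, ← powerSumLimit_mul_augMonomialLimit hl hk]
    ring
  rw [hp, gaussianExpectation_add, gaussianExpectation_sum, Complex.ofReal_add,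
    Complex.ofReal_sum]
  refine hlim.congr fun N => ?_
  rw [← map_sum, ← map_add, ← Finset.mul_sum, ← mul_add, ← scaled_psum_mul_scaledAugMonomial]
  congr 1
  ring

lemma scaledAugMonomial_mul (h : ConvergesTo ψ a p) {s : ℕ} (k : Fin s → ℕ)
    (hk : ∀ j, 1 ≤ k j) :
    ConvergesTo ψ (fun N => scaledAugMonomial N k * a N) (augMonomialLimit k * p) := by
  induction s with
  | zero => simpa only [scaledAugMonomial_fin_zero, augMonomialLimit_fin_zero, one_mul] using h
  | succ s ih =>
    obtain ⟨l, k, rfl⟩ : ∃ l k', k = (Fin.cons l k' : Fin (s + 1) → ℕ) :=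
      ⟨k 0, Fin.tail k, (Fin.cons_self_tail k).symm⟩
    have hl : 1 ≤ l := hk 0
    have hk' : ∀ j, 1 ≤ k j := fun j => hk j.succ
    have hupd : ∀ j i, 1 ≤ Function.update k j (k j + l) i := by
      intro j i
      rcases eq_or_ne i j with rfl | hij
      · simp only [Function.update_self]; omega
      · simpa [hij] using hk' i
    have hlim := ((ih k hk').psum_mul hl).sub
      (ConvergesTo.sum Finset.univ fun j _ => ih _ (hupd j))
    convert hlim using 1
    · ext1 N
      rw [← mul_assoc, scaled_psum_mul_scaledAugMonomial, ← Finset.sum_mul]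
      ring
    · rw [← mul_assoc, powerSumLimit_mul_augMonomialLimit hl hk', ← Finset.sum_mul]
      ring

lemma scaledAugMonomial_pow (h : ConvergesTo ψ (fun _ => 1) 1) {s : ℕ} (k : Fin s → ℕ)
    (hk : ∀ j, 1 ≤ k j) (m : ℕ) :
    ConvergesTo ψ (fun N => scaledAugMonomial N k ^ m) (augMonomialLimit k ^ m) := by
  induction m with
  | zero => simpa only [pow_zero] using h
  | succ m ih => simpa only [pow_succ'] using ih.scaledAugMonomial_mul k hk

lemma tendsto (h : ConvergesTo ψ a p) :
    Tendsto (fun N => ψ N (a N)) atTop (𝓝 ((gaussianExpectation p : ℝ) : ℂ)) := by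
  simpa only [scaledAugMonomial_fin_zero, augMonomialLimit_fin_zero, mul_one] using
    h (Fin.elim0 : Fin 0 → ℕ) fun j => j.elim0

end ConvergesTo

lemma apply_augMonomial {N : ℕ} (ψ : MvPolynomial (Fin N) ℂ →ₗ[ℂ] ℂ) {c : ℕ → ℂ} (hc0 : c 0 = 1)
    (hψ : ∀ d, ψ (monomial d 1) = ∏ i, c (d i)) {s : ℕ} (k : Fin s → ℕ) :
    ψ (augMonomial (Fin N) k) = (N.descFactorial s : ℂ) * ∏ j, c (k j) := by
  have hf : ∀ f : Fin s ↪ Fin N, ψ (∏ j, X (f j) ^ k j) = ∏ j, c (k j) := by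
    intro f
    have hmon : (∏ j, X (f j) ^ k j : MvPolynomial (Fin N) ℂ) =
        monomial (∑ j, Finsupp.single (f j) (k j)) 1 := by
      rw [monomial_sum_one]
      simp only [X_pow_eq_monomial]
    rw [hmon, hψ]
    symm
    refine Fintype.prod_of_injective f f.injective _ _ ?_ ?_
    · intro i hi
      rw [Finsupp.finsetSum_apply, Finset.sum_eq_zero, hc0]
      exact fun j _ => Finsupp.single_eq_of_ne fun h => hi ⟨j, h.symm⟩
    · intro j
      rw [Finsupp.finsetSum_apply, Finset.sum_eq_single j]
      · simp
      · exact fun i _ hij => Finsupp.single_eq_of_ne fun h => hij (f.injective h.symm)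
      · simp
  rw [augMonomial, map_sum, Finset.sum_congr rfl fun f _ => hf f, Finset.sum_const,
    Finset.card_univ, Fintype.card_embedding_eq, Fintype.card_fin, Fintype.card_fin, nsmul_eq_mul]

lemma tendsto_descFactorial_div_pow (s : ℕ) :
    Tendsto (fun N : ℕ => (N.descFactorial s : ℂ) / (N : ℂ) ^ s) atTop (𝓝 1) := by
  have h : Tendsto (fun N : ℕ => (N.descFactorial s : ℝ) / (N : ℝ) ^ s) atTop (𝓝 1) := by
    refine (Asymptotics.isEquivalent_iff_tendsto_one ?_).1 (isEquivalent_descFactorial s)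
    filter_upwards [eventually_ne_atTop 0] with N hN
    exact pow_ne_zero _ (by exact_mod_cast hN)
  have h' := (Complex.continuous_ofReal.tendsto 1).comp h
  rw [Complex.ofReal_one] at h'
  exact h'.congr fun N => by simp

lemma tendsto_natCast_mul_normScale_pow {c : ℕ → ℂ} (hc1 : c 1 = 0) (hc2 : c 2 = 1) {l : ℕ}
    (hl : 1 ≤ l) :
    Tendsto (fun N : ℕ => (N : ℂ) * normScale N ^ l * c l) atTop
      (𝓝 (if l = 2 then 1 else 0)) := by
  obtain rfl | hl1 := eq_or_lt_of_le hl
  · simp [hc1]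
  obtain ⟨l, rfl⟩ : ∃ r, l = r + 2 := ⟨l - 2, by omega⟩
  have hev : (fun N : ℕ => normScale N ^ l * c (l + 2)) =ᶠ[atTop]
      fun N : ℕ => (N : ℂ) * normScale N ^ (l + 2) * c (l + 2) := by
    filter_upwards [eventually_ne_atTop 0] with N hN
    rw [pow_add, mul_left_comm, natCast_mul_normScale_sq hN, mul_one]
  refine Tendsto.congr' hev ?_
  have h := (tendsto_normScale.pow l).mul_const (c (l + 2))
  rcases eq_or_ne l 0 with rfl | hl0
  · simp [hc2]
  · simpa [hl0] using h

lemma convergesTo_one {ψ : ∀ N, MvPolynomial (Fin N) ℂ →ₗ[ℂ] ℂ} {c : ℕ → ℂ} (hc0 : c 0 = 1)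
    (hc1 : c 1 = 0) (hc2 : c 2 = 1) (hψ : ∀ N d, ψ N (monomial d 1) = ∏ i, c (d i)) :
    ConvergesTo ψ (fun _ => 1) 1 := by
  intro s k hk
  have hlim := (tendsto_descFactorial_div_pow s).mul (tendsto_finsetProd Finset.univ
    fun j _ => tendsto_natCast_mul_normScale_pow hc1 hc2 (hk j))
  rw [one_mul, gaussianExpectation_augMonomialLimit hk]
  rw [one_mul] at hlim
  simp only [Complex.ofReal_prod, apply_ite Complex.ofReal, Complex.ofReal_one,
    Complex.ofReal_zero]
  refine hlim.congr' ?_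
  filter_upwards [eventually_ne_atTop 0] with N hN
  have hN' : (N : ℂ) ^ s ≠ 0 := pow_ne_zero _ (by exact_mod_cast hN)
  rw [one_mul, scaledAugMonomial, map_smul, apply_augMonomial (ψ N) hc0 (hψ N),
    Finset.prod_mul_distrib, Finset.prod_mul_distrib, Finset.prod_const, Finset.card_univ,
    Fintype.card_fin, Finset.prod_pow_eq_pow_sum, smul_eq_mul]
  field_simp

end Convergence

section TensorPower

variable {A : Type*} [Ring A] [Algebra ℂ A]

/-- The algebra homomorphism from polynomials in `N` commuting variables to `A^{⊗N}` sending the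
`i`-th variable to `b(i)`. -/
def polyToTensor (b : A) (N : ℕ) : MvPolynomial (Fin N) ℂ →ₐ[ℂ] ⨂[ℂ] _ : Fin N, A :=
  AddMonoidAlgebra.lift ℂ _ _
    { toFun := fun d => PiTensorProduct.tprod ℂ fun i => b ^ (d.toAdd i)
      map_one' := by simp [PiTensorProduct.one_def, Pi.one_def]
      map_mul' := fun d e => by
        rw [PiTensorProduct.tprod_mul_tprod]
        congr 1
        ext i
        simp [pow_add] }

lemma polyToTensor_monomial (b : A) (N : ℕ) (d : Fin N →₀ ℕ) :
    polyToTensor b N (MvPolynomial.monomial d 1) =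
      PiTensorProduct.tprod ℂ fun i => b ^ d i := by
  rw [polyToTensor, ← MvPolynomial.single_eq_monomial]
  simp

lemma polyToTensor_X (b : A) (N : ℕ) (i : Fin N) :
    polyToTensor b N (MvPolynomial.X i) = elemAt b N i := by
  rw [MvPolynomial.X, polyToTensor_monomial, elemAt]
  congr 1
  ext j
  rcases eq_or_ne j i with rfl | hij
  · simp
  · simp [hij, Finsupp.single_eq_of_ne hij]

lemma polyToTensor_esymm (b : A) (N n : ℕ) :
    polyToTensor b N (MvPolynomial.esymm (Fin N) ℂ n) = bPow b N n := by
  rw [MvPolynomial.esymm, bPow, map_sum]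
  refine Finset.sum_congr rfl fun s _ => ?_
  have hprod : ∏ i ∈ s, (MvPolynomial.X i : MvPolynomial (Fin N) ℂ) =
      ((s.sort (· ≤ ·)).map MvPolynomial.X).prod := by
    rw [← Multiset.prod_coe, ← Multiset.map_coe, Finset.sort_eq]
    rfl
  rw [hprod, map_list_prod, List.map_map]
  congr 2
  ext i
  exact polyToTensor_X b N i

lemma prodState_polyToTensor_monomial (φ : A →ₗ[ℂ] ℂ) (b : A) (N : ℕ) (d : Fin N →₀ ℕ) :
    prodState φ N (polyToTensor b N (MvPolynomial.monomial d 1)) = ∏ i, φ (b ^ d i) := by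
  rw [polyToTensor_monomial, prodState, PiTensorProduct.lift.tprod]
  simp

lemma polyToTensor_scaledAugMonomial_one (b : A) (N n : ℕ) :
    polyToTensor b N (scaledAugMonomial N fun _ : Fin n => 1) =
      ((n.factorial : ℂ) * (((N : ℝ) ^ (-(n : ℝ) / 2) : ℝ) : ℂ)) • bPow b N n := by
  have hpow : normScale N ^ n = (((N : ℝ) ^ (-(n : ℝ) / 2) : ℝ) : ℂ) := by
    rw [normScale, ← Complex.ofReal_pow, ← Real.rpow_mul_natCast (Nat.cast_nonneg N)]
    congr 2
    ring
  rw [scaledAugMonomial, augMonomial_one, map_smul, map_smul, polyToTensor_esymm, smul_smul,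
    Finset.sum_const, Finset.card_univ, Fintype.card_fin, smul_eq_mul, mul_one, hpow, mul_comm]

end TensorPower

/-- Theorem 3.3: for a self-adjoint `b` with `φ(b) = 0` and `φ(b²) = 1`, the normalized
sums `n!·b^{(N,n)}/N^{n/2}` converge in moments (w.r.t. the product states `φ^{⊗N}`) to
`H̃_n(g)` where `g` is standard Gaussian and `H̃_n` is the monic Hermite polynomial of
degree `n`. -/
theorem bPow_tendsto_hermite_of_gaussian
    {A : Type*} [Ring A] [Algebra ℂ A] [StarRing A] [StarModule ℂ A]
    (φ : A →ₗ[ℂ] ℂ) (hφ_unital : φ 1 = 1) (hφ_pos : ∀ a, 0 ≤ φ (star a * a))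
    (b : A) (hb : star b = b) (hb1 : φ b = 0) (hb2 : φ (b * b) = 1)
    (n : ℕ) (hn : 1 ≤ n) (m : ℕ) (hm : 1 ≤ m) :
    Tendsto
      (fun N : ℕ =>
        prodState φ N
          ((((n.factorial : ℂ) * (((N : ℝ) ^ (-(n : ℝ) / 2) : ℝ) : ℂ)) • bPow b N n) ^ m))
      atTop
      (𝓝 ((∫ x : ℝ, (Polynomial.aeval x (Polynomial.hermite n) : ℝ) ^ m
            ∂(ProbabilityTheory.gaussianReal 0 1) : ℝ) : ℂ)) := by
  have hone : ConvergesTo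
      (fun N => (prodState φ N).comp (polyToTensor b N).toLinearMap) (fun _ => 1) 1 :=
    convergesTo_one (c := fun l => φ (b ^ l)) (by simpa using hφ_unital) (by simpa using hb1)
      (by simpa [pow_two] using hb2) fun N d => prodState_polyToTensor_monomial φ b N d
  have hlim := (hone.scaledAugMonomial_pow (fun _ : Fin n => 1) (fun _ => le_rfl) m).tendsto
  simp only [LinearMap.comp_apply, AlgHom.toLinearMap_apply, map_pow,
    polyToTensor_scaledAugMonomial_one, augMonomialLimit_one] at hlim
  convert hlim using 4
  simp [gaussianExpectation, hermiteReal, Polynomial.aeval_def, Polynomial.eval_map]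
end
end
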